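/- If G is a graph of order n with fewer than 3n-6 edges that contains a universal vertex, then G has a forest cut. -/

import Mathlib

/-- `S` is a vertex cut of `G`: some two vertices outside of `S` lie in
different connected components of `G - S`. -/
def IsVertexCut {V : Type*} (G : SimpleGraph V) (S : Set V) : Prop :=
  ∃ a b : ↥(Sᶜ), ¬ (G.induce Sᶜ).Reachable a b

/-- A forest cut is a vertex cut whose induced subgraph is a forest. -/
def IsForestCut {V : Type*} (G : SimpleGraph V) (S : Set V) : Prop :=
  IsVertexCut G S ∧ (G.induce S).IsAcyclic

open Classical in
/-- ordered adjacent pairs inside `X` -/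
noncomputable def adjPairs {V : Type*} (G : SimpleGraph V) (X : Finset V) : Finset (V × V) :=
  (X ×ˢ X).filter (fun p => G.Adj p.1 p.2)

def HasGoodCut {V : Type*} (G : SimpleGraph V) (X : Finset V) (u : V) : Prop :=
  ∃ S A B : Set V, (∀ x, x ∈ X ↔ x ∈ S ∨ x ∈ A ∨ x ∈ B) ∧
    (∀ x ∈ S, x ∉ A ∧ x ∉ B) ∧ (∀ x ∈ A, x ∉ B) ∧ A.Nonempty ∧ B.Nonempty ∧
    (∀ x ∈ A, ∀ y ∈ B, ¬ G.Adj x y) ∧ (∀ x ∈ S, ∀ y ∈ S, ¬ G.Adj x y) ∧ (u ∉ S ∨ S = {u})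

def mergeGraph {V : Type*} (G : SimpleGraph V) (u v : V) : SimpleGraph V where
  Adj x y := G.Adj x y ∨ (x = u ∧ G.Adj v y ∧ y ≠ u) ∨ (y = u ∧ G.Adj v x ∧ x ≠ u)
  symm := ⟨by
    intro x y h
    have := G.adj_comm x y
    tauto⟩
  loopless := ⟨by
    intro x h
    have := G.irrefl (v := x)
    tauto⟩

lemma mem_adjPairs {V : Type*} (G : SimpleGraph V) (X : Finset V) (p : V × V) :
    p ∈ adjPairs G X ↔ p.1 ∈ X ∧ p.2 ∈ X ∧ G.Adj p.1 p.2 := by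
  simp [adjPairs, and_assoc]

open Classical in
lemma merge_card {V : Type*} (G : SimpleGraph V) (X : Finset V) (u v a : V)
    (hu : u ∈ X) (hv : v ∈ X) (ha : a ∈ X) (huv : G.Adj u v) (hua : G.Adj u a)
    (hva : G.Adj v a) :
    (adjPairs (mergeGraph G u v) (X.erase v)).card + 4 ≤ (adjPairs G X).card := by
  have n1 := huv.ne
  have n2 := hua.ne
  have n3 := hva.ne
  set Q : Finset (V × V) := {(u, v), (v, u), (v, a), (a, v)} with hQ
  have hQc : Q.card = 4 := by
    rw [hQ]
    repeat rw [Finset.card_insert_of_notMem]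
    · simp
    all_goals (simp; grind)
  have hQs : Q ⊆ adjPairs G X := by
    intro p hp
    simp only [hQ, Finset.mem_insert, Finset.mem_singleton] at hp
    rw [mem_adjPairs]
    rcases hp with rfl | rfl | rfl | rfl
    · exact ⟨hu, hv, huv⟩
    · exact ⟨hv, hu, huv.symm⟩
    · exact ⟨hv, ha, hva⟩
    · exact ⟨ha, hv, hva.symm⟩
  let f : V → V := fun x => if x = v then u else x
  have hsub : adjPairs (mergeGraph G u v) (X.erase v) ⊆
      (adjPairs G X \ Q).image (fun p => (f p.1, f p.2)) := by
    rintro ⟨x, y⟩ hp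
    rw [mem_adjPairs] at hp
    simp only [Finset.mem_erase] at hp
    obtain ⟨⟨hxv, hx⟩, ⟨hyv, hy⟩, h⟩ := hp
    have key : ∀ x' y', x' ∈ X → y' ∈ X → G.Adj x' y' → (x', y') ∉ Q → f x' = x → f y' = y →
        (x, y) ∈ (adjPairs G X \ Q).image (fun p => (f p.1, f p.2)) := by
      intro x' y' h1 h2 h3 h4 h5 h6
      rw [Finset.mem_image]
      refine ⟨(x', y'), ?_, by simp [h5, h6]⟩
      rw [Finset.mem_sdiff, mem_adjPairs]
      exact ⟨⟨h1, h2, h3⟩, h4⟩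
    have base : G.Adj x y → (x, y) ∈ (adjPairs G X \ Q).image (fun p => (f p.1, f p.2)) := by
      intro h
      apply key x y hx hy h
      · simp [hQ]; grind
      · simp [f, hxv]
      · simp [f, hyv]
    rcases h with h | ⟨rfl, h, hyu⟩ | ⟨rfl, h, hxu⟩
    · exact base h
    · by_cases hya : y = a
      · subst hya; exact base hua
      · apply key v y hv hy h
        · simp [hQ]; grind
        · simp [f]
        · simp [f, hyv]
    · by_cases hxa : x = a
      · subst hxa; exact base hua.symm
      · apply key x v hx hv h.symm
        · simp [hQ]; grind
        · simp [f, hxv]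
        · simp [f]
  have h1 := Finset.card_le_card hsub
  have h2 := Finset.card_image_le (s := adjPairs G X \ Q) (f := fun p => (f p.1, f p.2))
  have h3 := Finset.card_sdiff_add_card_eq_card hQs
  omega

open Classical in
lemma split_card {V : Type*} (G : SimpleGraph V) (X Y Z : Finset V) (u v : V)
    (hX : ∀ x, x ∈ X ↔ x ∈ Y ∨ x ∈ Z) (hYZ : ∀ x, x ∈ Y → x ∈ Z → x = u ∨ x = v) :
    (adjPairs G Y).card + (adjPairs G Z).card ≤ (adjPairs G X).card + 2 := by
  rw [← Finset.card_union_add_card_inter]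
  have h1 : (adjPairs G Y ∪ adjPairs G Z).card ≤ (adjPairs G X).card := by
    apply Finset.card_le_card
    intro p hp
    simp only [Finset.mem_union, mem_adjPairs, hX] at *
    tauto
  have h2 : (adjPairs G Y ∩ adjPairs G Z).card ≤ ({(u, v), (v, u)} : Finset (V × V)).card := by
    apply Finset.card_le_card
    rintro ⟨x, y⟩ hp
    simp only [Finset.mem_inter, mem_adjPairs] at hp
    have := hYZ x hp.1.1 hp.2.1
    have := hYZ y hp.1.2.1 hp.2.2.1
    have := hp.1.2.2.ne
    simp
    grind
  have h3 := Finset.card_le_two (a := (u, v)) (b := (v, u))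
  omega

lemma HasGoodCut.lift {V : Type*} {G : SimpleGraph V} {X Y : Finset V} {B : Set V} {u v : V}
    (huv : G.Adj u v) (hX : ∀ x, x ∈ X ↔ x ∈ Y ∨ x ∈ B) (hYB : ∀ x ∈ Y, x ∉ B)
    (hadj : ∀ x ∈ Y, x ≠ u → x ≠ v → ∀ y ∈ B, ¬ G.Adj x y)
    (h : HasGoodCut G Y u) : HasGoodCut G X u := by
  obtain ⟨S, A1, B1, h1, h2, h3, h4, h5, h6, h7, h8⟩ := h
  have main : ∀ A1 B1 : Set V, (∀ x, x ∈ Y ↔ x ∈ S ∨ x ∈ A1 ∨ x ∈ B1) →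
      (∀ x ∈ S, x ∉ A1 ∧ x ∉ B1) → (∀ x ∈ A1, x ∉ B1) → A1.Nonempty → B1.Nonempty →
      (∀ x ∈ A1, ∀ y ∈ B1, ¬ G.Adj x y) → u ∉ A1 → v ∉ A1 → HasGoodCut G X u := by
    intro A1 B1 h1 h2 h3 h4 h5 h6 hu hv
    refine ⟨S, A1, B1 ∪ B, ?_, ?_, ?_, h4, h5.mono Set.subset_union_left, ?_, h7, h8⟩
    · intro x
      rw [hX, h1, Set.mem_union]; tauto
    · intro x hx
      have := hYB x ((h1 x).2 (Or.inl hx))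
      have := h2 x hx
      rw [Set.mem_union]; tauto
    · intro x hx
      have := hYB x ((h1 x).2 (Or.inr (Or.inl hx)))
      have := h3 x hx
      rw [Set.mem_union]; tauto
    · rintro x hx y (hy | hy)
      · exact h6 x hx y hy
      · apply hadj x ((h1 x).2 (Or.inr (Or.inl hx))) _ _ y hy
        · rintro rfl; exact hu hx
        · rintro rfl; exact hv hx
  by_cases hA : u ∉ A1 ∧ v ∉ A1
  · exact main A1 B1 h1 h2 h3 h4 h5 h6 hA.1 hA.2
  · apply main B1 A1 (fun x => by rw [h1]; tauto) (fun x hx => (h2 x hx).symm)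
      (fun x hx hx' => h3 x hx' hx) h5 h4 (fun x hx y hy h => h6 y hy x hx h.symm)
    · intro hu
      have : u ∉ A1 := fun h => h3 u h hu
      have : v ∈ A1 := by tauto
      exact h6 v this u hu huv.symm
    · intro hv
      have : v ∉ A1 := fun h => h3 v h hv
      have : u ∈ A1 := by tauto
      exact h6 u this v hv huv

lemma even_card_adjPairs {V : Type*} (G : SimpleGraph V) (X : Finset V) :
    Even (adjPairs G X).card := by
  rw [← ZMod.natCast_eq_zero_iff_even, Finset.card_eq_sum_ones, Nat.cast_sum]
  refine Finset.sum_involution (fun p _ => (p.2, p.1)) ?_ ?_ ?_ ?_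
  · intro p _; decide
  · rintro ⟨x, y⟩ hp _ h
    rw [mem_adjPairs] at hp
    simp only [Prod.mk.injEq] at h
    exact hp.2.2.ne h.2
  · rintro ⟨x, y⟩ hp
    rw [mem_adjPairs] at hp ⊢
    exact ⟨hp.2.1, hp.1, hp.2.2.symm⟩
  · intro p _; rfl

set_option maxHeartbeats 1000000 in
open Classical in
theorem exists_goodCut {V : Type*} (n : ℕ) : ∀ (G : SimpleGraph V) (X : Finset V) (u : V),
    X.card = n → u ∈ X → (adjPairs G X).card + 8 ≤ 4 * X.card → HasGoodCut G X u := by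
  induction n using Nat.strong_induction_on with
  | _ n ih =>
  intro G X u hn hu hc
  by_cases htri : ∃ v ∈ X, ∃ a ∈ X, G.Adj u v ∧ G.Adj u a ∧ G.Adj v a
  · obtain ⟨v, hv, a, ha, huv, hua, hva⟩ := htri
    have hm := merge_card G X u v a hu hv ha huv hua hva
    have hce := Finset.card_erase_add_one hv
    obtain ⟨S, A, B, h1, h2, h3, h4, h5, h6, h7, h8⟩ :=
      ih (n - 1) (by omega) (mergeGraph G u v) (X.erase v) u (by omega)
        (by simp [hu, huv.ne]) (by omega)
    have hvX : ∀ x, x ∈ S ∨ x ∈ A ∨ x ∈ B → x ≠ v := by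
      intro x hx
      exact (Finset.mem_erase.1 ((h1 x).2 hx)).1
    have hX : ∀ x, x ∈ X ↔ x = v ∨ x ∈ S ∨ x ∈ A ∨ x ∈ B := by
      intro x
      rw [← h1 x, Finset.mem_erase]
      by_cases hx : x = v
      · subst hx; simp [hv]
      · simp [hx]
    have huX : u ∈ S ∨ u ∈ A ∨ u ∈ B := by
      have := (hX u).1 hu
      have := huv.ne
      tauto
    rcases h8 with h8 | rfl
    · have main : ∀ A B : Set V, (∀ x, x ∈ X ↔ x = v ∨ x ∈ S ∨ x ∈ A ∨ x ∈ B) →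
          (∀ x, x ∈ S ∨ x ∈ A ∨ x ∈ B → x ≠ v) →
          (∀ x ∈ S, x ∉ A ∧ x ∉ B) → (∀ x ∈ A, x ∉ B) → A.Nonempty → B.Nonempty →
          (∀ x ∈ A, ∀ y ∈ B, ¬ (mergeGraph G u v).Adj x y) → u ∈ A → HasGoodCut G X u := by
        intro A B hX hvX h2 h3 h4 h5 h6 huA
        refine ⟨S, insert v A, B, ?_, ?_, ?_, Set.insert_nonempty _ _, h5, ?_, ?_, Or.inl h8⟩
        · intro x
          rw [hX, Set.mem_insert_iff]; tauto
        · intro x hx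
          have := h2 x hx
          have := hvX x (Or.inl hx)
          rw [Set.mem_insert_iff]; tauto
        · rintro x (rfl | hx) hx'
          · exact hvX x (by tauto) rfl
          · exact h3 x hx hx'
        · rintro x (rfl | hx) y hy hxy
          · refine h6 u huA y hy (Or.inr (Or.inl ⟨rfl, hxy, ?_⟩))
            rintro rfl
            exact h3 y huA hy
          · exact h6 x hx y hy (Or.inl hxy)
        · intro x hx y hy hxy
          exact h7 x hx y hy (Or.inl hxy)
      by_cases huA : u ∈ A
      · exact main A B hX hvX h2 h3 h4 h5 h6 huA
      · refine main B A (fun x => by rw [hX]; tauto) (fun x hx => hvX x (by tauto))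
          (fun x hx => (h2 x hx).symm)
          (fun x hx hx' => h3 x hx' hx) h5 h4 (fun x hx y hy h => h6 y hy x hx h.symm) (by tauto)
    · -- `{u, v}` is a cut
      have huAB := h2 u rfl
      have hvA : v ∉ A := fun h => hvX v (by tauto) rfl
      have hvB : v ∉ B := fun h => hvX v (by tauto) rfl
      set Y := X.filter (fun x => x ∉ B) with hY
      set Z := X.filter (fun x => x ∉ A) with hZ
      have hs := split_card G X Y Z u v
        (by intro x; have := h3 x; simp [hY, hZ]; tauto)
        (by intro x hx hx'; have := hX x; simp [hY, hZ] at *; tauto)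
      have hYZ : Y.card + Z.card = X.card + 2 := by
        rw [← Finset.card_union_add_card_inter]
        have e1 : Y ∪ Z = X := by
          ext x; have := h3 x; simp [hY, hZ]; tauto
        have e2 : Y ∩ Z = {u, v} := by
          ext x
          have := hX x
          simp only [hY, hZ, Finset.mem_inter, Finset.mem_filter, Finset.mem_insert,
            Finset.mem_singleton, Set.mem_singleton_iff] at *
          constructor
          · tauto
          · rintro (rfl | rfl) <;> tauto
        rw [e1, e2, Finset.card_pair huv.ne]
      have hYlt : Y.card < X.card := by
        apply Finset.card_lt_card
        refine Finset.filter_ssubset.2 ?_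
        obtain ⟨b, hb⟩ := h5
        exact ⟨b, (hX b).2 (by tauto), by simpa using hb⟩
      have hZlt : Z.card < X.card := by
        apply Finset.card_lt_card
        refine Finset.filter_ssubset.2 ?_
        obtain ⟨b, hb⟩ := h4
        exact ⟨b, (hX b).2 (by tauto), by simpa using hb⟩
      obtain ⟨p, hp⟩ := even_card_adjPairs G Y
      obtain ⟨q, hq⟩ := even_card_adjPairs G Z
      have hcase : (adjPairs G Y).card + 8 ≤ 4 * Y.card ∨
          (adjPairs G Z).card + 8 ≤ 4 * Z.card := by
        omega
      rcases hcase with hY' | hZ'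
      · refine HasGoodCut.lift (Y := Y) (B := B) huv ?_ ?_ ?_
          (ih _ (by omega) G Y u rfl (by simp [hY, hu, huAB.2]) hY')
        · intro x; have := hX x; simp [hY]; tauto
        · intro x hx; simp [hY] at hx; exact hx.2
        · intro x hx hxu hxv y hy hxy
          simp only [hY, Finset.mem_filter] at hx
          have := (hX x).1 hx.1
          simp only [Set.mem_singleton_iff] at this
          exact h6 x (by tauto) y hy (Or.inl hxy)
      · refine HasGoodCut.lift (Y := Z) (B := A) huv ?_ ?_ ?_
          (ih _ (by omega) G Z u rfl (by simp [hZ, hu, huAB.1]) hZ')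
        · intro x; have := hX x; simp [hZ]; tauto
        · intro x hx; simp [hZ] at hx; exact hx.2
        · intro x hx hxu hxv y hy hxy
          simp only [hZ, Finset.mem_filter] at hx
          have := (hX x).1 hx.1
          simp only [Set.mem_singleton_iff] at this
          exact h6 y hy x (by tauto) (Or.inl hxy.symm)
  · by_cases hall : ∃ b ∈ X, b ≠ u ∧ ¬ G.Adj u b
    · obtain ⟨b, hb, hbu, hub⟩ := hall
      refine ⟨{x | x ∈ X ∧ G.Adj u x}, {u}, {x | x ∈ X ∧ x ≠ u ∧ ¬ G.Adj u x}, ?_, ?_, ?_,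
        ⟨u, rfl⟩, ⟨b, hb, hbu, hub⟩, ?_, ?_, Or.inl (by simp)⟩
      · intro x
        simp only [Set.mem_setOf_eq, Set.mem_singleton_iff]
        by_cases hx : x = u
        · subst hx; simp [hu]
        · tauto
      · rintro x ⟨h1, h2⟩
        have := h2.ne'
        simp; tauto
      · rintro x rfl; simp
      · rintro x rfl y hy; exact hy.2.2
      · rintro x ⟨hx, hux⟩ y ⟨hy, huy⟩ hxy
        exact htri ⟨x, hx, y, hy, hux, huy, hxy⟩
    · push Not at hall
      have hc1 : 1 < X.card := by omega
      obtain ⟨b, hb, hbu⟩ := Finset.exists_mem_ne hc1 u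
      have hpos : 0 < (adjPairs G X).card := 
        Finset.card_pos.2 ⟨(u, b), (mem_adjPairs _ _ _).2 ⟨hu, hb, hall b hb hbu⟩⟩
      have hc2 : 2 < X.card := by omega
      obtain ⟨c, hcX, hcu, hcb⟩ : ∃ c ∈ X, c ≠ u ∧ c ≠ b := by
        by_contra! hno
        have : X ⊆ {u, b} := by
          intro x hx
          have := hno x hx
          simp; tauto
        have := Finset.card_le_card this
        have := Finset.card_le_two (a := u) (b := b)
        omega
      refine ⟨{u}, {b}, {x | x ∈ X ∧ x ≠ u ∧ x ≠ b}, ?_, ?_, ?_, ⟨b, rfl⟩, ⟨c, hcX, hcu, hcb⟩,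
        ?_, ?_, Or.inr rfl⟩
      · intro x
        simp only [Set.mem_setOf_eq, Set.mem_singleton_iff]
        by_cases hx : x = u
        · subst hx; simp [hu]
        by_cases hx : x = b
        · subst hx; simp [hb]
        tauto
      · rintro x rfl; simp [hbu.symm]
      · rintro x rfl; simp
      · rintro x rfl y ⟨hy, hyu, _⟩ hxy
        exact htri ⟨x, hb, y, hy, hall x hb hbu, hall y hy hyu, hxy⟩
      · rintro x rfl y rfl; exact G.irrefl

open Classical in
lemma adjPairs_univ_card {V : Type*} [Fintype V] (G : SimpleGraph V) [Fintype G.edgeSet] :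
    (adjPairs G Finset.univ).card = 2 * G.edgeFinset.card := by
  have h := G.dart_card_eq_twice_card_edges
  have e : (G.edgeFinset).card = (@SimpleGraph.edgeFinset _ G (SimpleGraph.fintypeEdgeSet G)).card := by
    congr!
  rw [e, ← h, ← Finset.card_univ]
  symm
  refine Finset.card_bij (fun d _ => d.toProd) ?_ ?_ ?_
  · intro d _
    rw [mem_adjPairs]
    exact ⟨Finset.mem_univ _, Finset.mem_univ _, d.adj⟩
  · intro d _ d' _ h
    exact SimpleGraph.Dart.ext _ _ h
  · intro p hp
    rw [mem_adjPairs] at hp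
    exact ⟨⟨p, hp.2.2⟩, Finset.mem_univ _, rfl⟩

open Classical in
lemma adjPairs_erase_card {V : Type*} [Fintype V] (G : SimpleGraph V) (u : V)
    (hu : ∀ v : V, v ≠ u → G.Adj u v) :
    (adjPairs G (Finset.univ.erase u)).card + 2 * (Finset.univ.erase u).card ≤
      (adjPairs G Finset.univ).card := by
  set X := Finset.univ.erase u with hX
  have h1 : (X.image (fun x => (u, x))).card = X.card :=
    Finset.card_image_of_injective _ (fun x y h => by simpa using h)
  have h2 : (X.image (fun x => (x, u))).card = X.card :=
    Finset.card_image_of_injective _ (fun x y h => by simpa using h)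
  have d1 : Disjoint (X.image (fun x => (u, x))) (X.image (fun x => (x, u))) := by
    rw [Finset.disjoint_left]
    rintro ⟨x, y⟩ hx hy
    simp [hX] at hx hy
    grind
  have d2 : Disjoint (adjPairs G X)
      (X.image (fun x => (u, x)) ∪ X.image (fun x => (x, u))) := by
    rw [Finset.disjoint_left]
    rintro ⟨x, y⟩ hx hy
    rw [mem_adjPairs] at hx
    simp [hX] at hx hy
    grind
  have h3 := Finset.card_union_of_disjoint d1
  have h4 := Finset.card_union_of_disjoint d2
  have h5 : adjPairs G X ∪ (X.image (fun x => (u, x)) ∪ X.image (fun x => (x, u))) ⊆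
      adjPairs G Finset.univ := by
    rintro ⟨x, y⟩ hx
    simp only [Finset.mem_union, mem_adjPairs, Finset.mem_image, Prod.mk.injEq, hX,
      Finset.mem_erase] at *
    rcases hx with h | ⟨a, ⟨ha, _⟩, rfl, rfl⟩ | ⟨a, ⟨ha, _⟩, rfl, rfl⟩
    · exact ⟨Finset.mem_univ _, Finset.mem_univ _, h.2.2⟩
    · exact ⟨Finset.mem_univ _, Finset.mem_univ _, hu _ ha⟩
    · exact ⟨Finset.mem_univ _, Finset.mem_univ _, (hu _ ha).symm⟩
  have h6 := Finset.card_le_card h5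
  omega

/-- If `G` is a graph of order `n` with fewer than `3n - 6` edges that contains a
universal vertex, then `G` has a forest cut. -/
theorem sparse_graph_with_universal_vertex_has_forest_cut
    {V : Type*} [Fintype V] (G : SimpleGraph V) [Fintype G.edgeSet]
    (h : (G.edgeFinset.card : ℤ) < 3 * Fintype.card V - 6)
    (huniv : ∃ u : V, ∀ v : V, v ≠ u → G.Adj u v) :
    ∃ S : Set V, IsForestCut G S := by
  classical
  obtain ⟨u, hu⟩ := huniv
  have hc1 := adjPairs_univ_card G
  have hc2 := adjPairs_erase_card G u hu
  have hc3 := Finset.card_erase_add_one (Finset.mem_univ u)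
  rw [Finset.card_univ] at hc3
  have hne : (Finset.univ.erase u).Nonempty := by
    rw [← Finset.card_pos]; omega
  obtain ⟨w, hw⟩ := hne
  obtain ⟨S, A, B, h1, h2, h3, ⟨a, ha⟩, ⟨b, hb⟩, h6, h7, -⟩ :=
    exists_goodCut _ G (Finset.univ.erase u) w rfl hw (by omega)
  have hX : ∀ x, x ≠ u ↔ x ∈ S ∨ x ∈ A ∨ x ∈ B := by
    intro x; rw [← h1 x]; simp
  refine ⟨insert u S, ⟨⟨a, ?_⟩, ⟨b, ?_⟩, ?_⟩, ?_⟩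
  · have := (hX a).2 (by tauto)
    have := h2 a
    simp; tauto
  · have := (hX b).2 (by tauto)
    have := h2 b
    simp; tauto
  · have key : ∀ x y : ↥((insert u S)ᶜ), (G.induce (insert u S)ᶜ).Reachable x y →
        x.1 ∈ A → y.1 ∈ A := by
      rintro x y ⟨p⟩
      induction p with
      | nil => exact id
      | @cons x y z hxy _ ih =>
        intro hx
        apply ih
        have hy := y.2
        simp only [Set.mem_compl_iff, Set.mem_insert_iff, not_or] at hy
        have hyX := (hX y).1 hy.1
        have : y.1 ∉ B := fun hB => h6 x hx y hB hxy
        tauto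
    intro hr
    exact h3 b (key _ _ hr ha) hb
  · refine SimpleGraph.IsAcyclic.anti ?_
      (SimpleGraph.isAcyclic_starGraph (⟨u, Set.mem_insert _ _⟩ : ↥(insert u S)))
    rintro ⟨x, hx⟩ ⟨y, hy⟩ hxy
    have hxy' : G.Adj x y := hxy
    rw [SimpleGraph.starGraph_adj]
    refine ⟨hxy.ne, ?_⟩
    simp only [Subtype.mk.injEq]
    rcases hx with hx | hx
    · exact Or.inl hx
    rcases hy with hy | hy
    · exact Or.inr hy
    exact absurd hxy' (h7 x hx y hy)
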